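/- Let G be a G-metric on a nonempty set X, let X_1,…,X_m be nonempty subsets of X, and let T : ∪_{i=1}^m X_i → ∪_{i=1}^m X_i be a cyclical operator. Write D(x,y) = G(x,y,y) + G(y,x,x). Suppose T is a G-Mohsenialhosseini cyclical operator: there exist constants α, β, γ ∈ [0,1/2) such that for all x ∈ X_i and y ∈ X_{i+1} (indices mod m) at least one of the following holds: (i) D(Tx,Ty) ≤ α·(D(x,y) + D(Tx,Ty)); (ii) D(Tx,Ty) ≤ β·(D(x,Tx) + D(y,Ty)); (iii) D(Tx,Ty) ≤ γ·(D(x,Ty) + D(y,Tx)). Then for every ε > 0 the set F_ε^G(T) of ε-fixed points of T is nonempty. -/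

import Mathlib

open Filter Set

/-- A G-metric on a set `X`. -/
structure IsGMetric {X : Type*} (G : X → X → X → ℝ) : Prop where
  eq_iff : ∀ x y z, G x y z = 0 ↔ x = y ∧ y = z
  pos : ∀ x y, x ≠ y → 0 < G x x y
  mono : ∀ x y z, z ≠ y → G x x y ≤ G x y z
  symm_swap : ∀ x y z, G x y z = G x z y
  symm_cycle : ∀ x y z, G x y z = G y z x
  rect : ∀ x y z a, G x y z ≤ G x a a + G a y z

/-- `D(x,y) = G(x,y,y) + G(y,x,x)`. -/
def gD {X : Type*} (G : X → X → X → ℝ) (x y : X) : ℝ :=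
  G x y y + G y x x

/-- `T` is a cyclical operator with respect to the family of sets `A`. -/
def IsCyclical {X : Type*} {m : ℕ} [NeZero m] (A : Fin m → Set X) (T : X → X) : Prop :=
  ∀ i : Fin m, Set.MapsTo T (A i) (A (i + 1))

/-!
`D` is a genuine metric, so only metric arguments are needed. At `y = T x` each of the three
alternatives gives `D(Tx, T²x) ≤ r (D(x, Tx) + D(Tx, T²x))` with `r = max 0 α β γ < 1/2`, the third
one by the triangle inequality through `T x`. Hence `D(Tx, T²x) ≤ k D(x, Tx)` with
`k = r / (1 - r) < 1`, and the steps `D(Tⁿx, Tⁿ⁺¹x)` of every orbit decay geometrically.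
-/

open scoped Topology

namespace IsGMetric

variable {X : Type*} {G : X → X → X → ℝ}

theorem nonneg_right_diag (hG : IsGMetric G) (x y : X) : 0 ≤ G x y y := by
  rcases eq_or_ne x y with rfl | hxy
  · exact ((hG.eq_iff x x x).2 ⟨rfl, rfl⟩).ge
  · rw [hG.symm_cycle]
    exact (hG.pos y x hxy.symm).le

theorem gD_self (hG : IsGMetric G) (x : X) : gD G x x = 0 := by
  simp [gD, (hG.eq_iff x x x).2 ⟨rfl, rfl⟩]

theorem gD_triangle (hG : IsGMetric G) (x y z : X) : gD G x z ≤ gD G x y + gD G y z := by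
  have hxz := hG.rect x z z y
  have hzx := hG.rect z x x y
  unfold gD
  linarith

theorem eq_of_gD_eq_zero (hG : IsGMetric G) {x y : X} (h : gD G x y = 0) : x = y := by
  have hxy : G x y y = 0 :=
    ((add_eq_zero_iff_of_nonneg (hG.nonneg_right_diag x y) (hG.nonneg_right_diag y x)).1 h).1
  exact ((hG.eq_iff x y y).1 hxy).1

/-- The metric space structure on `X` whose distance is `D(x, y) = G(x, y, y) + G(y, x, x)`; it
transfers metric results to G-metric spaces. -/
abbrev toMetricSpace (hG : IsGMetric G) : MetricSpace X where
  dist := gD G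
  dist_self := hG.gD_self
  dist_comm _ _ := add_comm _ _
  dist_triangle := hG.gD_triangle
  eq_of_dist_eq_zero := hG.eq_of_gD_eq_zero

end IsGMetric

theorem IsCyclical.mapsTo_iUnion {X : Type*} {m : ℕ} [NeZero m] {A : Fin m → Set X} {T : X → X}
    (hT : IsCyclical A T) : MapsTo T (⋃ i, A i) (⋃ i, A i) :=
  Set.mapsTo_iUnion.2 fun i _ hx => mem_iUnion_of_mem (i + 1) (hT i hx)

theorem le_div_one_sub_mul_of_le_mul_add {𝕜 : Type*} [Field 𝕜] [LinearOrder 𝕜]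
    [IsStrictOrderedRing 𝕜] {r a b : 𝕜} (hr : r < 1) (h : b ≤ r * (a + b)) :
    b ≤ r / (1 - r) * a := by
  rw [div_mul_eq_mul_div, le_div_iff₀ (sub_pos.2 hr)]
  linarith

section PseudoMetric

variable {X : Type*} [PseudoMetricSpace X] {S : Set X} {T : X → X} {α β γ r k : ℝ} {x : X}

/-- The Mohsenialhosseini contraction condition with constants `α, β, γ` for `T` at one pair of
points `(x, y)`; taking it pointwise lets it be imposed only on pairs `(x, T x)`. -/
def MohsenialhosseiniAt (α β γ : ℝ) (T : X → X) (x y : X) : Prop :=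
  dist (T x) (T y) ≤ α * (dist x y + dist (T x) (T y)) ∨
  dist (T x) (T y) ≤ β * (dist x (T x) + dist y (T y)) ∨
  dist (T x) (T y) ≤ γ * (dist x (T y) + dist y (T x))

theorem MohsenialhosseiniAt.dist_map_le_mul_add (h : MohsenialhosseiniAt α β γ T x (T x))
    (hr : 0 ≤ r) (hα : α ≤ r) (hβ : β ≤ r) (hγ : γ ≤ r) :
    dist (T x) (T (T x)) ≤ r * (dist x (T x) + dist (T x) (T (T x))) := by
  rcases h with h | h | h
  · exact h.trans (by gcongr)
  · exact h.trans (by gcongr)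
  · calc dist (T x) (T (T x))
        ≤ γ * dist x (T (T x)) := by rwa [dist_self, add_zero] at h
      _ ≤ r * dist x (T (T x)) := by gcongr
      _ ≤ r * (dist x (T x) + dist (T x) (T (T x))) := by gcongr; exact dist_triangle _ _ _

theorem exists_dist_map_le_mul (hα : α < 1 / 2) (hβ : β < 1 / 2) (hγ : γ < 1 / 2)
    (h : ∀ x ∈ S, MohsenialhosseiniAt α β γ T x (T x)) :
    ∃ k : ℝ, 0 ≤ k ∧ k < 1 ∧ ∀ x ∈ S, dist (T x) (T (T x)) ≤ k * dist x (T x) := by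
  obtain ⟨r, hr0, hr, hαr, hβr, hγr⟩ : ∃ r : ℝ, 0 ≤ r ∧ r < 1 / 2 ∧ α ≤ r ∧ β ≤ r ∧ γ ≤ r :=
    ⟨max 0 (max α (max β γ)), by simp, by norm_num [hα, hβ, hγ], by simp, by simp, by simp⟩
  have hr1 : r < 1 := by linarith
  refine ⟨r / (1 - r), div_nonneg hr0 (sub_nonneg.2 hr1.le), ?_, fun x hx => ?_⟩
  · rw [div_lt_one (sub_pos.2 hr1)]
    linarith
  · exact le_div_one_sub_mul_of_le_mul_add hr1 ((h x hx).dist_map_le_mul_add hr0 hαr hβr hγr)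

theorem tendsto_dist_iterate_map_of_le_mul (hT : MapsTo T S S) (hk0 : 0 ≤ k) (hk1 : k < 1)
    (h : ∀ x ∈ S, dist (T x) (T (T x)) ≤ k * dist x (T x)) (hx : x ∈ S) :
    Tendsto (fun n => dist (T^[n] x) (T (T^[n] x))) atTop (𝓝 0) := by
  have geometric_bound (n : ℕ) : dist (T^[n] x) (T (T^[n] x)) ≤ k ^ n * dist x (T x) :=
    le_geom (u := fun n => dist (T^[n] x) (T (T^[n] x))) hk0 n fun j _ => by
      simpa only [Function.iterate_succ_apply'] using h _ (hT.iterate j hx)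
  have bound_tendsto : Tendsto (fun n => k ^ n * dist x (T x)) atTop (𝓝 0) := by
    simpa using (tendsto_pow_atTop_nhds_zero_of_lt_one hk0 hk1).mul_const (dist x (T x))
  exact squeeze_zero (fun _ => dist_nonneg) geometric_bound bound_tendsto

theorem stmt_7_general (hS : S.Nonempty) (hT : MapsTo T S S)
    (hα : α < 1 / 2) (hβ : β < 1 / 2) (hγ : γ < 1 / 2)
    (h : ∀ x ∈ S, MohsenialhosseiniAt α β γ T x (T x)) :
    ∀ ε > 0, {x ∈ S | dist x (T x) < ε}.Nonempty := by
  intro ε hε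
  obtain ⟨x, hx⟩ := hS
  obtain ⟨k, hk0, hk1, hk⟩ := exists_dist_map_le_mul hα hβ hγ h
  obtain ⟨n, hn⟩ :=
    ((tendsto_dist_iterate_map_of_le_mul hT hk0 hk1 hk hx).eventually_lt_const hε).exists
  exact ⟨T^[n] x, hT.iterate n hx, hn⟩

end PseudoMetric

/-- A G-Mohsenialhosseini cyclical operator has, for every `ε > 0`, a nonempty set of
`ε`-fixed points. -/
theorem stmt_7 {X : Type*} [Nonempty X] {m : ℕ} [NeZero m]
    (G : X → X → X → ℝ) (hG : IsGMetric G)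
    (A : Fin m → Set X) (hA : ∀ i, (A i).Nonempty)
    (T : X → X) (hT : IsCyclical A T)
    (α β γ : ℝ)
    (hα : α ∈ Set.Ico (0 : ℝ) (1/2)) (hβ : β ∈ Set.Ico (0 : ℝ) (1/2))
    (hγ : γ ∈ Set.Ico (0 : ℝ) (1/2))
    (hcontr : ∀ i : Fin m, ∀ x ∈ A i, ∀ y ∈ A (i + 1),
      gD G (T x) (T y) ≤ α * (gD G x y + gD G (T x) (T y)) ∨
      gD G (T x) (T y) ≤ β * (gD G x (T x) + gD G y (T y)) ∨
      gD G (T x) (T y) ≤ γ * (gD G x (T y) + gD G y (T x))) :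
    ∀ ε > 0, {x ∈ ⋃ i, A i | gD G x (T x) < ε}.Nonempty := by
  let := hG.toMetricSpace
  refine stmt_7_general (nonempty_iUnion.2 ⟨0, hA 0⟩) hT.mapsTo_iUnion hα.2 hβ.2 hγ.2 fun x hx => ?_
  obtain ⟨i, hxi⟩ := mem_iUnion.1 hx
  exact hcontr i x hxi (T x) (hT i hxi)
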